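/- Assume M ≥ 2 and fix ε > 0. There exist C > 0 and x₀ (depending only on δ, M, K, ξ, ε) such that for all x ≥ x₀ and every H ∈ 𝔥₁: E[#{q ∈ Q_H : |∑_{−Ky < n ≤ y} λ_b(H; q, n) − (K+1)y| > y/H^{1+ε}}] ≤ C·#Q_H / H^{M−4−2ε}. -/

import Mathlib

open scoped Classical

noncomputable def yy (δ x : ℝ) : ℕ := ⌈x * Real.log x ^ δ⌉₊

noncomputable def zz (δ x : ℝ) : ℝ :=
  (yy δ x : ℝ) * Real.log (Real.log x) ^ 2 / Real.log x ^ (1/2 : ℝ)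

noncomputable def primesUpTo (t : ℝ) : Finset ℕ :=
  (Finset.range (⌊t⌋₊ + 1)).filter fun p => p.Prime ∧ (p : ℝ) ≤ t

noncomputable def PP (t : ℝ) : ℕ := ∏ p ∈ primesUpTo t, p

noncomputable def sigUpTo (t : ℝ) : ℝ := ∏ p ∈ primesUpTo t, (1 - 1 / (p : ℝ))

noncomputable def primesBetween (w t : ℝ) : Finset ℕ :=
  (Finset.range (⌊t⌋₊ + 1)).filter fun p => p.Prime ∧ w < (p : ℝ) ∧ (p : ℝ) ≤ t

noncomputable def sigBetween (w t : ℝ) : ℝ := ∏ p ∈ primesBetween w t, (1 - 1 / (p : ℝ))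

def inS (t : ℝ) (b n : ℤ) : Prop :=
  ∀ p : ℕ, p.Prime → (p : ℝ) ≤ t → ¬ ((p : ℤ) ∣ (n - b))

def inSBetween (w t : ℝ) (b n : ℤ) : Prop :=
  ∀ p : ℕ, p.Prime → w < (p : ℝ) → (p : ℝ) ≤ t → ¬ ((p : ℤ) ∣ (n - b))

noncomputable def countS (t : ℝ) (b lo hi : ℤ) : ℕ :=
  ((Finset.Icc lo hi).filter (inS t b)).card

noncomputable def EE (δ x : ℝ) (g : ℤ → ℝ) : ℝ :=
  (1 / (PP (zz δ x) : ℝ)) * ∑ b ∈ Finset.range (PP (zz δ x)), g (b : ℤ)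

def frakH (δ ξ x : ℝ) : Set ℝ :=
  {H | ∃ j : ℕ, H = ξ ^ j ∧ 2 * (yy δ x : ℝ) / x ≤ H ∧ H ≤ (yy δ x : ℝ) / (ξ * zz δ x)}

def frakH1 (δ ξ x : ℝ) : Set ℝ :=
  {H | ∃ j : ℕ, Even j ∧ H = ξ ^ j ∧ 2 * (yy δ x : ℝ) / x ≤ H ∧ H ≤ (yy δ x : ℝ) / (ξ * zz δ x)}

def frakH2 (δ ξ x : ℝ) : Set ℝ :=
  {H | ∃ j : ℕ, Odd j ∧ H = ξ ^ j ∧ 2 * (yy δ x : ℝ) / x ≤ H ∧ H ≤ (yy δ x : ℝ) / (ξ * zz δ x)}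

noncomputable def QH (δ ξ x H : ℝ) : Finset ℕ :=
  (Finset.range (⌊(yy δ x : ℝ) / H⌋₊ + 1)).filter fun q =>
    q.Prime ∧ (yy δ x : ℝ) / (ξ * H) < (q : ℝ) ∧ (q : ℝ) ≤ (yy δ x : ℝ) / H

noncomputable def Hq (δ ξ x : ℝ) (q : ℕ) : ℝ :=
  if h : ∃ H ∈ frakH δ ξ x, (yy δ x : ℝ) / (ξ * H) < (q : ℝ) ∧ (q : ℝ) ≤ (yy δ x : ℝ) / H
  then h.choose else 1

noncomputable def APset (M : ℝ) (K : ℕ) (b : ℤ) (H : ℝ) (q : ℕ) (n : ℤ) : Finset ℤ :=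
  ((Finset.Icc 1 ⌊(K : ℝ) * H⌋₊).image fun h : ℕ => n + (q : ℤ) * (h : ℤ)).filter (inS (H ^ M) b)

noncomputable def lam (M zv : ℝ) (K : ℕ) (b : ℤ) (H : ℝ) (q : ℕ) (n : ℤ) : ℝ :=
  if ∀ m ∈ APset M K b H q n, inSBetween (H ^ M) zv b m
  then sigBetween (H ^ M) zv ^ (-((APset M K b H q n).card : ℤ))
  else 0

noncomputable def APsetStar (M : ℝ) (K : ℕ) (N b : ℤ) (H : ℝ) (q : ℕ) (n : ℤ) : Finset ℤ :=
  ((Finset.Icc 1 ⌊(K : ℝ) * H⌋₊).image fun h : ℕ => n - (q : ℤ) * (h : ℤ)).filter (inS (H ^ M) (-N - b))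

noncomputable def lamStar (M zv : ℝ) (K : ℕ) (N b : ℤ) (H : ℝ) (q : ℕ) (n : ℤ) : ℝ :=
  if ∀ m ∈ APsetStar M K N b H q n, inSBetween (H ^ M) zv (-N - b) m
  then sigBetween (H ^ M) zv ^ (-((APsetStar M K N b H q n).card : ℤ))
  else 0

/-!
Fix `H` and `q ∈ Q_H`, and let `T = H ^ M`. By the Chinese remainder theorem the residues of `b`
modulo the primes up to `T`, which determine the sets `AP_b(KH; q, n)`, and modulo the primes in
`(T, z]`, which determine the weights, are independent. With the former fixed, each `λ_b(H; q, n)`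
has mean `1 + O(H ^ (2 - M))`, and the mean of a product of two weights is at most
`exp (∑ 2 e_p / p)`, where `e_p` counts the coincidences modulo `p` between the two
progressions; a coincidence means that `p` divides a nonzero difference of their elements. Jensen's
inequality separates these differences, and as `n` varies the prime divisors exceeding `T` of a
difference contribute `O(H ^ (2 - M))` on average. The pairs whose progressions intersect are too
few to matter, even with the trivial bound for the weights, because `H ≤ √(log x)`. The variance
of the sum over `n` is therefore `O(y ^ 2 H ^ (2 - M))`, and Chebyshev's inequality at height
`y / H ^ (1 + ε)` gives the result.
-/

section

open Finset Real Filter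

open scoped BigOperators

section Averages

lemma expect_range_mul_of_coprime {m n : ℕ} (h : m.Coprime n) (hm : m ≠ 0) (hn : n ≠ 0)
    {F : ℕ → ℕ → ℝ} (hF₁ : ∀ b, Function.Periodic (F · b) m)
    (hF₂ : ∀ a, Function.Periodic (F a) n) :
    𝔼 c ∈ range (m * n), F c c = 𝔼 a ∈ range m, 𝔼 b ∈ range n, F a b := by
  rw [← expect_product']
  refine expect_nbij' (fun c => (c % m, c % n))
    (fun ab => (Nat.chineseRemainder h ab.1 ab.2 : ℕ)) ?_ ?_ ?_ ?_ ?_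
  · intro c _
    simp [Nat.mod_lt _ (Nat.pos_of_ne_zero hm), Nat.mod_lt _ (Nat.pos_of_ne_zero hn)]
  · intro ab _
    simpa using Nat.chineseRemainder_lt_mul h ab.1 ab.2 hm hn
  · intro c hc
    have hcrt := (Nat.chineseRemainder h (c % m) (c % n)).2
    have hmod : (Nat.chineseRemainder h (c % m) (c % n) : ℕ) ≡ c [MOD m * n] :=
      (Nat.modEq_and_modEq_iff_modEq_mul h).1
        ⟨hcrt.1.trans (Nat.mod_modEq _ _), hcrt.2.trans (Nat.mod_modEq _ _)⟩
    exact hmod.eq_of_lt_of_lt (Nat.chineseRemainder_lt_mul h _ _ hm hn) (by simpa using hc)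
  · rintro ⟨a, b⟩ hab
    simp only [mem_product, mem_range] at hab
    have hcrt := (Nat.chineseRemainder h a b).2
    ext
    · exact Eq.trans hcrt.1 (Nat.mod_eq_of_lt hab.1)
    · exact Eq.trans hcrt.2 (Nat.mod_eq_of_lt hab.2)
  · intro c _
    exact ((hF₁ _).map_mod_nat c).symm.trans ((hF₂ _).map_mod_nat c).symm

lemma expect_card_filter_lt_abs_le {ι κ : Type*} (s : Finset ι) (Q : Finset κ) (f : ι → κ → ℝ)
    {V τ : ℝ} (hτ : 0 < τ) (hV : ∀ q ∈ Q, 𝔼 i ∈ s, f i q ^ 2 ≤ V) :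
    𝔼 i ∈ s, (#{q ∈ Q | τ < |f i q|} : ℝ) ≤ #Q * (V / τ ^ 2) := by
  calc 𝔼 i ∈ s, (#{q ∈ Q | τ < |f i q|} : ℝ)
      ≤ 𝔼 i ∈ s, ∑ q ∈ Q, f i q ^ 2 / τ ^ 2 := by
        refine expect_le_expect fun i _ => ?_
        rw [← sum_boole]
        refine sum_le_sum fun q _ => ?_
        split_ifs with h
        · rw [one_le_div (by positivity), ← sq_abs (f i q)]
          gcongr
        · positivity
    _ = ∑ q ∈ Q, (𝔼 i ∈ s, f i q ^ 2) / τ ^ 2 := by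
        simp only [expect_sum_comm, expect_div]
    _ ≤ ∑ _q ∈ Q, V / τ ^ 2 := by
        gcongr with q hq
        exact hV q hq
    _ = #Q * (V / τ ^ 2) := by rw [sum_const, nsmul_eq_mul]

lemma expect_sq_sum_sub_card_le {ι κ : Type*} {s : Finset ι} (hs : s.Nonempty) (I : Finset κ)
    (X : κ → ι → ℝ) {V η : ℝ} (hmean : ∀ n ∈ I, 1 - η ≤ 𝔼 i ∈ s, X n i)
    (hrow : ∀ n ∈ I, ∑ m ∈ I, 𝔼 i ∈ s, X n i * X m i ≤ #I + V) :
    𝔼 i ∈ s, (∑ n ∈ I, X n i - #I) ^ 2 ≤ #I * (V + 2 * #I * η) := by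
  have hexpand : 𝔼 i ∈ s, (∑ n ∈ I, X n i - #I) ^ 2 =
      ∑ n ∈ I, ∑ m ∈ I, 𝔼 i ∈ s, X n i * X m i - 2 * #I * ∑ n ∈ I, 𝔼 i ∈ s, X n i +
        (#I : ℝ) ^ 2 := by
    simp only [← expect_sum_comm]
    rw [mul_expect, ← expect_sub_distrib, ← expect_const hs ((#I : ℝ) ^ 2),
      ← expect_add_distrib]
    refine expect_congr rfl fun i _ => ?_
    rw [← sum_mul_sum]
    ring
  have hsecond := sum_le_card_nsmul I _ _ hrow
  have hfirst := card_nsmul_le_sum I _ _ hmean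
  rw [nsmul_eq_mul] at hsecond hfirst
  rw [hexpand]
  nlinarith [mul_le_mul_of_nonneg_left hfirst (Nat.cast_nonneg (α := ℝ) #I)]

end Averages

section Inequalities

lemma exp_sub_one_le_mul_exp (v : ℝ) : exp v - 1 ≤ v * exp v := by
  have h := mul_le_mul_of_nonneg_left (add_one_le_exp (-v)) (exp_pos v).le
  rw [← exp_add, add_neg_cancel, exp_zero] at h
  linarith

lemma exp_sum_sub_one_le {ι : Type*} (s : Finset ι) (f : ι → ℝ) :
    exp (∑ i ∈ s, f i) - 1 ≤ 𝔼 i ∈ s, (exp (#s * f i) - 1) := by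
  rcases s.eq_empty_or_nonempty with rfl | hs
  · simp
  have hcard : (0 : ℝ) < #s := by exact_mod_cast hs.card_pos
  have hjensen := convexOn_exp.map_sum_le (t := s) (w := fun _ => (#s : ℝ)⁻¹)
    (p := fun i => #s * f i) (fun _ _ => by positivity)
    (by rw [sum_const, nsmul_eq_mul, mul_inv_cancel₀ hcard.ne']) (fun _ _ => Set.mem_univ _)
  simp only [smul_eq_mul, inv_mul_cancel_left₀ hcard.ne'] at hjensen
  rw [expect_sub_distrib, expect_const hs, expect_eq_sum_div_card, div_eq_inv_mul, mul_sum]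
  linarith

lemma one_sub_sum_le_prod_one_sub {ι : Type*} (s : Finset ι) {f : ι → ℝ}
    (h0 : ∀ i ∈ s, 0 ≤ f i) (h1 : ∀ i ∈ s, f i ≤ 1) :
    1 - ∑ i ∈ s, f i ≤ ∏ i ∈ s, (1 - f i) := by
  induction s using Finset.induction_on with
  | empty => simp
  | insert a s ha ih =>
    rw [forall_mem_insert] at h0 h1
    rw [sum_insert ha, prod_insert ha]
    nlinarith [mul_le_mul_of_nonneg_left (ih h0.2 h1.2) (sub_nonneg.2 h1.1),
      mul_nonneg h0.1 (sum_nonneg h0.2)]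

lemma sum_inv_sq_le {s : Finset ℕ} {T : ℝ} (hT : 0 < T) (hs : ∀ p ∈ s, T < p) :
    ∑ p ∈ s, ((p : ℝ) ^ 2)⁻¹ ≤ 2 / T := by
  have hsub : s ⊆ Ioo ⌊T⌋₊ (s.sup id + 1) := fun p hp => mem_Ioo.2
    ⟨(Nat.floor_lt hT.le).2 (hs p hp), Nat.lt_succ_of_le (le_sup (f := id) hp)⟩
  calc ∑ p ∈ s, ((p : ℝ) ^ 2)⁻¹
      ≤ ∑ p ∈ Ioo ⌊T⌋₊ (s.sup id + 1), ((p : ℝ) ^ 2)⁻¹ :=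
        sum_le_sum_of_subset_of_nonneg hsub fun _ _ _ => by positivity
    _ ≤ 2 / ((⌊T⌋₊ : ℝ) + 1) := sum_Ioo_inv_sq_le _ _
    _ ≤ 2 / T := by
        gcongr
        exact (Nat.lt_floor_add_one T).le

lemma one_sub_one_div_pos {x : ℝ} (hx : 1 < x) : 0 < 1 - 1 / x := by
  rw [sub_pos, div_lt_one (by linarith)]
  exact hx

lemma one_add_one_div_le_inv {x : ℝ} (hx : 1 < x) : 1 + 1 / x ≤ (1 - 1 / x)⁻¹ := by
  rw [le_inv_comm₀ (by positivity) (one_sub_one_div_pos hx), ← one_div,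
    le_div_iff₀ (by positivity)]
  nlinarith [sq_nonneg (1 / x)]

lemma inv_one_sub_one_div_le_exp {x : ℝ} (hx : 2 ≤ x) : (1 - 1 / x)⁻¹ ≤ exp (2 / x) := by
  refine le_trans ?_ (add_one_le_exp _)
  rw [inv_le_iff_one_le_mul₀ (one_sub_one_div_pos (by linarith))]
  have hid : (2 / x + 1) * (1 - 1 / x) = 1 + (x - 2) / x ^ 2 := by field_simp; ring
  have hnonneg : 0 ≤ (x - 2) / x ^ 2 := div_nonneg (by linarith) (by positivity)
  linarith

lemma one_sub_sq_div_sq_le {x : ℝ} {k ν : ℕ} (hx : 1 < x) (hν : ν ≤ k) (hk : (k : ℝ) ≤ x) :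
    1 - (k : ℝ) ^ 2 / x ^ 2 ≤ (1 - 1 / x)⁻¹ ^ k * (1 - ν / x) := by
  have hx0 : 0 < x := by linarith
  have hdensity : 1 + k / x ≤ (1 - 1 / x)⁻¹ ^ k :=
    calc 1 + k / x = 1 + k * (1 / x) := by ring
      _ ≤ (1 + 1 / x) ^ k :=
        one_add_mul_le_pow (by linarith [show (0 : ℝ) ≤ 1 / x by positivity]) k
      _ ≤ (1 - 1 / x)⁻¹ ^ k := by
        gcongr
        exact one_add_one_div_le_inv hx
  have hk1 : 0 ≤ 1 - k / x := sub_nonneg.2 ((div_le_one hx0).2 hk)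
  calc 1 - (k : ℝ) ^ 2 / x ^ 2 = (1 + k / x) * (1 - k / x) := by ring
    _ ≤ (1 - 1 / x)⁻¹ ^ k * (1 - k / x) := by gcongr
    _ ≤ (1 - 1 / x)⁻¹ ^ k * (1 - ν / x) := by
        have := one_sub_one_div_pos hx
        gcongr

lemma inv_one_sub_one_div_pow_mul_le_exp {x : ℝ} {k ν e : ℕ} (hx : 2 ≤ x) (hν : (ν : ℝ) ≤ x)
    (hk : k ≤ ν + e) : (1 - 1 / x)⁻¹ ^ k * (1 - ν / x) ≤ exp (e * (2 / x)) := by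
  have hx0 : 0 < x := by linarith
  have hpos : 0 < 1 - 1 / x := one_sub_one_div_pos (by linarith)
  have hone : 1 ≤ (1 - 1 / x)⁻¹ := by
    rw [one_le_inv₀ hpos]
    linarith [show 0 ≤ 1 / x by positivity]
  have hbernoulli : 1 - ν / x ≤ (1 - 1 / x) ^ ν := by
    have := one_add_mul_le_pow (a := -(1 / x)) (by linarith) ν
    rw [← sub_eq_add_neg] at this
    exact le_trans (le_of_eq (by ring)) this
  calc (1 - 1 / x)⁻¹ ^ k * (1 - ν / x)
      ≤ (1 - 1 / x)⁻¹ ^ (ν + e) * (1 - ν / x) := by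
        have := sub_nonneg.2 ((div_le_one hx0).2 hν)
        gcongr
    _ ≤ (1 - 1 / x)⁻¹ ^ (ν + e) * (1 - 1 / x) ^ ν := by gcongr
    _ = (1 - 1 / x)⁻¹ ^ e := by
        rw [pow_add, mul_right_comm, ← mul_pow, inv_mul_cancel₀ hpos.ne', one_pow, one_mul]
    _ ≤ exp (2 / x) ^ e := by
        gcongr
        exact inv_one_sub_one_div_le_exp hx
    _ = exp (e * (2 / x)) := (exp_nat_mul _ _).symm

end Inequalities

section Sieve

/-- `Avoids s A c` says that `A` survives the sieve which removes the residue class of `c`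
modulo every `p ∈ s`. -/
def Avoids (s : Finset ℕ) (A : Finset ℤ) (c : ℤ) : Prop :=
  ∀ p ∈ s, ∀ m ∈ A, ¬ (p : ℤ) ∣ m - c

/-- The number of residue classes modulo `p` occupied by `A`, often written `ν_p(A)`. -/
def residueCount (p : ℕ) (A : Finset ℤ) : ℕ := #(A.image (· % (p : ℤ)))

lemma avoids_add_natCast_iff {s : Finset ℕ} {N : ℕ} (hN : ∀ p ∈ s, p ∣ N) (A : Finset ℤ)
    (c : ℤ) : Avoids s A (c + N) ↔ Avoids s A c := by
  refine forall₂_congr fun p hp => forall₂_congr fun m _ => not_congr ?_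
  rw [← sub_sub]
  exact dvd_sub_left (Int.natCast_dvd_natCast.2 (hN p hp))

lemma avoids_insert {s : Finset ℕ} {A : Finset ℤ} {c : ℤ} (p : ℕ) :
    Avoids (insert p s) A c ↔ Avoids {p} A c ∧ Avoids s A c := by
  simp [Avoids]

lemma avoids_union {s : Finset ℕ} {A B : Finset ℤ} {c : ℤ} :
    Avoids s (A ∪ B) c ↔ Avoids s A c ∧ Avoids s B c := by
  simp only [Avoids, mem_union, or_imp, forall_and]

lemma residueCount_le_card (p : ℕ) (A : Finset ℤ) : residueCount p A ≤ #A := card_image_le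

lemma residueCount_le {p : ℕ} (hp : p ≠ 0) (A : Finset ℤ) : residueCount p A ≤ p := by
  have hp0 : (0 : ℤ) < p := by exact_mod_cast Nat.pos_of_ne_zero hp
  have hsub : A.image (· % (p : ℤ)) ⊆ Ico 0 (p : ℤ) := image_subset_iff.2 fun m _ =>
    mem_Ico.2 ⟨Int.emod_nonneg m hp0.ne', Int.emod_lt_of_pos m hp0⟩
  exact (card_le_card hsub).trans_eq (by simp)

lemma card_filter_not_avoids {p : ℕ} (hp : p ≠ 0) (A : Finset ℤ) :
    #{c ∈ range p | ¬ Avoids {p} A (c : ℕ)} = residueCount p A := by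
  have hp0 : (0 : ℤ) < p := by exact_mod_cast Nat.pos_of_ne_zero hp
  refine card_bij (fun c _ => (c : ℤ)) ?_ (fun a _ b _ h => by exact_mod_cast h) ?_
  · intro c hc
    simp only [mem_filter, mem_range, Avoids, mem_singleton, forall_eq, not_forall, not_not] at hc
    obtain ⟨hcp, m, hm, hdvd⟩ := hc
    have hmod : m % p = (c : ℤ) % p := (Int.modEq_iff_dvd.2 hdvd).symm
    exact mem_image.2
      ⟨m, hm, hmod.trans (Int.emod_eq_of_lt (by positivity) (by exact_mod_cast hcp))⟩
  · intro r hr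
    obtain ⟨m, hm, rfl⟩ := mem_image.1 hr
    have hlt := Int.emod_lt_of_pos m hp0
    have hcast := Int.toNat_of_nonneg (Int.emod_nonneg m hp0.ne')
    refine ⟨(m % p).toNat, ?_, hcast⟩
    simp only [mem_filter, mem_range, Avoids, mem_singleton, forall_eq, not_forall, not_not]
    exact ⟨by omega, m, hm, by rw [hcast]; exact Int.dvd_self_sub_emod⟩

lemma expect_avoids_singleton {p : ℕ} (hp : p ≠ 0) (A : Finset ℤ) :
    𝔼 c ∈ range p, (if Avoids {p} A (c : ℕ) then (1 : ℝ) else 0) = 1 - residueCount p A / p := by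
  have hcard := card_filter_add_card_filter_not (s := range p) (fun c : ℕ => Avoids {p} A c)
  rw [card_filter_not_avoids hp, card_range] at hcard
  have hcard' : (#{c ∈ range p | Avoids {p} A (c : ℕ)} : ℝ) + residueCount p A = p := by
    exact_mod_cast hcard
  have hp' : (p : ℝ) ≠ 0 := by exact_mod_cast hp
  rw [expect_eq_sum_div_card, sum_boole, card_range, eq_sub_iff_add_eq, ← add_div, hcard',
    div_self hp']

lemma expect_avoids {s : Finset ℕ} (hs : ∀ p ∈ s, p.Prime) (A : Finset ℤ) :
    𝔼 c ∈ range (∏ p ∈ s, p), (if Avoids s A (c : ℕ) then (1 : ℝ) else 0) =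
      ∏ p ∈ s, (1 - residueCount p A / (p : ℝ)) := by
  induction s using Finset.induction_on with
  | empty => simp [Avoids]
  | insert p s hp ih =>
    rw [forall_mem_insert] at hs
    obtain ⟨hpp, hs⟩ := hs
    have hcop : p.Coprime (∏ r ∈ s, r) := Nat.Coprime.prod_right fun r hr =>
      (Nat.coprime_primes hpp (hs r hr)).2 (by rintro rfl; exact hp hr)
    have hcrt := expect_range_mul_of_coprime hcop hpp.ne_zero
      (prod_ne_zero_iff.2 fun r hr => (hs r hr).ne_zero)
      (F := fun a b => (if Avoids {p} A (a : ℕ) then (1 : ℝ) else 0) *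
        if Avoids s A (b : ℕ) then 1 else 0)
      (fun b a => by simp only [Nat.cast_add, avoids_add_natCast_iff (s := {p}) (N := p) (by simp)])
      (fun a b => by
        simp only [Nat.cast_add, avoids_add_natCast_iff fun _ hr => dvd_prod_of_mem _ hr])
    simp only [← mul_expect, ← expect_mul] at hcrt
    rw [prod_insert hp, prod_insert hp, ← ih hs, ← expect_avoids_singleton hpp.ne_zero, ← hcrt]
    simp only [ite_zero_mul_ite_zero, mul_one, avoids_insert p (s := s)]

/-- The indicator that `A` survives the sieve by the class of `c` modulo the primes of `s`,
divided by the density of the sieved set raised to the power `#A`. -/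
noncomputable def sieveWeight (s : Finset ℕ) (A : Finset ℤ) (c : ℤ) : ℝ :=
  if Avoids s A c then (∏ p ∈ s, (1 - 1 / (p : ℝ))) ^ (-(#A : ℤ)) else 0

variable {s : Finset ℕ}

lemma sieveWeight_add_natCast {N : ℕ} (hN : ∀ p ∈ s, p ∣ N) (A : Finset ℤ) (c : ℤ) :
    sieveWeight s A (c + N) = sieveWeight s A c := by
  simp only [sieveWeight, avoids_add_natCast_iff hN]

lemma sieveWeight_eq_prod_mul_ite (s : Finset ℕ) (A : Finset ℤ) (c : ℤ) :
    sieveWeight s A c =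
      (∏ p ∈ s, (1 - 1 / (p : ℝ))⁻¹ ^ #A) * if Avoids s A c then 1 else 0 := by
  rw [sieveWeight, mul_ite, mul_one, mul_zero, zpow_neg, zpow_natCast, prod_pow,
    prod_inv_distrib, inv_pow]

lemma sieveWeight_mul_sieveWeight (s : Finset ℕ) (A B : Finset ℤ) (c : ℤ) :
    sieveWeight s A c * sieveWeight s B c =
      (∏ p ∈ s, (1 - 1 / (p : ℝ))⁻¹ ^ (#A + #B)) * if Avoids s (A ∪ B) c then 1 else 0 := by
  simp only [sieveWeight_eq_prod_mul_ite, avoids_union, pow_add, prod_mul_distrib]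
  rw [mul_mul_mul_comm, ite_zero_mul_ite_zero, mul_one]

lemma one_sub_prime_inv_pos {p : ℕ} (hp : p.Prime) : 0 < 1 - 1 / (p : ℝ) :=
  one_sub_one_div_pos (by exact_mod_cast hp.one_lt)

lemma sieveWeight_nonneg (hs : ∀ p ∈ s, p.Prime) (A : Finset ℤ) (c : ℤ) :
    0 ≤ sieveWeight s A c := by
  rw [sieveWeight_eq_prod_mul_ite]
  refine mul_nonneg (prod_nonneg fun p hp => ?_) (by positivity)
  have := one_sub_prime_inv_pos (hs p hp)
  positivity

lemma sieveWeight_le_exp (hs : ∀ p ∈ s, p.Prime) (A : Finset ℤ) (c : ℤ) :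
    sieveWeight s A c ≤ exp (#A * ∑ p ∈ s, 2 / (p : ℝ)) := by
  rw [sieveWeight_eq_prod_mul_ite, mul_sum, exp_sum]
  refine (mul_le_of_le_one_right (prod_nonneg fun p hp => ?_) (by split_ifs <;> norm_num)).trans
    (prod_le_prod (fun p hp => ?_) fun p hp => ?_)
  iterate 2
    have := one_sub_prime_inv_pos (hs p hp)
    positivity
  · have := one_sub_prime_inv_pos (hs p hp)
    rw [exp_nat_mul]
    gcongr
    exact inv_one_sub_one_div_le_exp (by exact_mod_cast (hs p hp).two_le)

lemma one_sub_sq_div_le_expect_sieveWeight (hs : ∀ p ∈ s, p.Prime) {T : ℝ} (hT : 0 < T)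
    (hsT : ∀ p ∈ s, T < p) {A : Finset ℤ} (hA : (#A : ℝ) ≤ T) :
    1 - 2 * (#A : ℝ) ^ 2 / T ≤ 𝔼 c ∈ range (∏ p ∈ s, p), sieveWeight s A (c : ℕ) := by
  simp only [sieveWeight_eq_prod_mul_ite]
  rw [← mul_expect, expect_avoids hs, ← prod_mul_distrib]
  have hle_one : ∀ p ∈ s, (#A : ℝ) ^ 2 / (p : ℝ) ^ 2 ≤ 1 := fun p hp => by
    rw [← div_pow]
    exact pow_le_one₀ (by positivity)
      ((div_le_one (hT.trans (hsT p hp))).2 (hA.trans (hsT p hp).le))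
  calc 1 - 2 * (#A : ℝ) ^ 2 / T ≤ 1 - ∑ p ∈ s, (#A : ℝ) ^ 2 / (p : ℝ) ^ 2 := by
        simp only [div_eq_mul_inv _ (_ ^ 2)]
        rw [← mul_sum, mul_comm 2 (_ ^ 2), mul_div_assoc]
        gcongr
        exact sum_inv_sq_le hT hsT
    _ ≤ ∏ p ∈ s, (1 - (#A : ℝ) ^ 2 / (p : ℝ) ^ 2) :=
        one_sub_sum_le_prod_one_sub s (fun _ _ => by positivity) hle_one
    _ ≤ _ := prod_le_prod (fun p hp => sub_nonneg.2 (hle_one p hp)) fun p hp =>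
        one_sub_sq_div_sq_le (by exact_mod_cast (hs p hp).one_lt) (residueCount_le_card p A)
          (hA.trans (hsT p hp).le)

lemma expect_sieveWeight_mul_le (hs : ∀ p ∈ s, p.Prime) {A B : Finset ℤ} {e : ℕ → ℕ}
    (he : ∀ p ∈ s, #A + #B ≤ residueCount p (A ∪ B) + e p) :
    𝔼 c ∈ range (∏ p ∈ s, p), sieveWeight s A (c : ℕ) * sieveWeight s B (c : ℕ) ≤
      exp (∑ p ∈ s, e p * (2 / (p : ℝ))) := by
  simp only [sieveWeight_mul_sieveWeight]
  rw [← mul_expect, expect_avoids hs, ← prod_mul_distrib, exp_sum]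
  have hν : ∀ p ∈ s, (residueCount p (A ∪ B) : ℝ) ≤ p := fun p hp => by
    exact_mod_cast residueCount_le (hs p hp).ne_zero _
  refine prod_le_prod (fun p hp => ?_) fun p hp => inv_one_sub_one_div_pow_mul_le_exp
    (by exact_mod_cast (hs p hp).two_le) (hν p hp) (he p hp)
  have := one_sub_prime_inv_pos (hs p hp)
  have := sub_nonneg.2 ((div_le_one (by exact_mod_cast (hs p hp).pos)).2 (hν p hp))
  positivity

end Sieve

section PrimeDivisors

/-- The sum of `1 / p` over the `p ∈ s` dividing `l`. Twice the sum of these over the differences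
of elements of two progressions controls the correlation of their sieve weights. -/
noncomputable def primeDivisorSum (s : Finset ℕ) (l : ℤ) : ℝ :=
  ∑ p ∈ s with ((p : ℕ) : ℤ) ∣ l, 1 / (p : ℝ)

variable {s : Finset ℕ}

lemma primeDivisorSum_nonneg (s : Finset ℕ) (l : ℤ) : 0 ≤ primeDivisorSum s l :=
  sum_nonneg fun _ _ => by positivity

lemma primeDivisorSum_natAbs (s : Finset ℕ) (l : ℤ) :
    primeDivisorSum s l.natAbs = primeDivisorSum s l := by
  simp only [primeDivisorSum, Int.dvd_natAbs]

lemma exp_mul_primeDivisorSum (s : Finset ℕ) (a : ℝ) (l : ℤ) :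
    exp (a * primeDivisorSum s l) =
      ∏ p ∈ s, (1 + if (p : ℤ) ∣ l then exp (a / p) - 1 else 0) := by
  rw [primeDivisorSum, mul_sum, sum_filter, exp_sum]
  refine prod_congr rfl fun p _ => ?_
  split_ifs
  · rw [mul_one_div, add_sub_cancel]
  · rw [exp_zero, add_zero]

lemma card_Icc_filter_prod_dvd_le (t : Finset ℕ) (R : ℕ) :
    (#{l ∈ Icc 1 R | (∏ p ∈ t, p) ∣ l} : ℝ) ≤ R / ∏ p ∈ t, (p : ℝ) := by
  have hcount := Nat.Ioc_filter_dvd_card_eq_div R (∏ p ∈ t, p)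
  rw [← Icc_add_one_left_eq_Ioc, zero_add] at hcount
  rw [hcount, ← Nat.cast_prod]
  exact Nat.cast_div_le

lemma prod_ite_dvd (ht : ∀ p ∈ s, p.Prime) (c : ℕ → ℝ) (l : ℕ) :
    (∏ p ∈ s, if p ∣ l then c p else 0) = if (∏ p ∈ s, p) ∣ l then ∏ p ∈ s, c p else 0 := by
  rw [prod_ite_zero]
  exact if_congr ⟨prod_primes_dvd l fun p hp => (ht p hp).prime,
    fun h p hp => (dvd_prod_of_mem _ hp).trans h⟩ rfl rfl

lemma sum_prod_one_add_ite_dvd_le (hs : ∀ p ∈ s, p.Prime) {c : ℕ → ℝ} (hc : ∀ p ∈ s, 0 ≤ c p)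
    (R : ℕ) :
    ∑ l ∈ Icc 1 R, ∏ p ∈ s, (1 + if p ∣ l then c p else 0) ≤ R * ∏ p ∈ s, (1 + c p / p) := by
  simp only [prod_one_add]
  rw [sum_comm, mul_sum]
  refine sum_le_sum fun t ht => ?_
  rw [mem_powerset] at ht
  simp only [prod_ite_dvd fun p hp => hs p (ht hp)]
  rw [← sum_filter, sum_const, nsmul_eq_mul, prod_div_distrib, mul_div_left_comm, mul_comm]
  gcongr
  · exact prod_nonneg fun p hp => hc p (ht hp)
  · exact card_Icc_filter_prod_dvd_le t R

lemma sum_exp_mul_primeDivisorSum_le (hs : ∀ p ∈ s, p.Prime) {a T : ℝ} (ha : 0 ≤ a) (hT : 0 < T)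
    (hsT : ∀ p ∈ s, T < p) (R : ℕ) :
    ∑ l ∈ Icc 1 R, exp (a * primeDivisorSum s (l : ℕ)) ≤
      R * exp (2 * a * exp (a / T) / T) := by
  simp only [exp_mul_primeDivisorSum, Int.natCast_dvd_natCast]
  have hc : ∀ p : ℕ, 0 ≤ exp (a / p) - 1 := fun p =>
    sub_nonneg.2 (one_le_exp (by positivity))
  refine (sum_prod_one_add_ite_dvd_le hs (fun p _ => hc p) R).trans ?_
  gcongr
  calc ∏ p ∈ s, (1 + (exp (a / p) - 1) / p)
      ≤ exp (∑ p ∈ s, (exp (a / p) - 1) / p) :=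
        prod_one_add_le_exp_sum _ fun p => div_nonneg (hc p) p.cast_nonneg
    _ ≤ exp (∑ p ∈ s, a * exp (a / T) * ((p : ℝ) ^ 2)⁻¹) := by
        gcongr with p hp
        have hp0 : (0 : ℝ) < p := hT.trans (hsT p hp)
        calc (exp (a / p) - 1) / p ≤ a / p * exp (a / p) / p := by
              gcongr
              exact exp_sub_one_le_mul_exp _
          _ ≤ a / p * exp (a / T) / p := by
              gcongr
              exact (hsT p hp).le
          _ = a * exp (a / T) * ((p : ℝ) ^ 2)⁻¹ := by ring
    _ ≤ exp (2 * a * exp (a / T) / T) := by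
        rw [← mul_sum, mul_assoc 2, mul_comm 2, mul_div_assoc]
        gcongr
        exact sum_inv_sq_le hT hsT

lemma sum_exp_mul_primeDivisorSum_sub_one_le (hs : ∀ p ∈ s, p.Prime) {a T : ℝ} (ha : 0 ≤ a)
    (hT : 0 < T) (hsT : ∀ p ∈ s, T < p) {R : ℕ} {S : Finset ℤ}
    (hS : ∀ l ∈ S, l ≠ 0 ∧ |l| ≤ R) :
    ∑ l ∈ S, (exp (a * primeDivisorSum s l) - 1) ≤
      2 * (R * (exp (2 * a * exp (a / T) / T) - 1)) := by
  have hnonneg : ∀ l : ℤ, 0 ≤ exp (a * primeDivisorSum s l) - 1 := fun l =>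
    sub_nonneg.2 (one_le_exp (mul_nonneg ha (primeDivisorSum_nonneg s l)))
  have hfiber : ∀ k : ℕ, #{l ∈ S | l.natAbs = k} ≤ 2 := fun k =>
    calc #{l ∈ S | l.natAbs = k} ≤ #{(k : ℤ), -(k : ℤ)} := card_le_card fun l hl => by
          have := (mem_filter.1 hl).2
          simp only [mem_insert, mem_singleton]
          omega
      _ ≤ 2 := card_le_two
  calc ∑ l ∈ S, (exp (a * primeDivisorSum s l) - 1)
      = ∑ k ∈ Icc 1 R, ∑ l ∈ S with l.natAbs = k, (exp (a * primeDivisorSum s l) - 1) := by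
        refine (sum_fiberwise_of_maps_to (fun l hl => ?_) _).symm
        have := hS l hl
        rw [Int.abs_eq_natAbs] at this
        rw [mem_Icc]
        omega
    _ ≤ ∑ k ∈ Icc 1 R, 2 * (exp (a * primeDivisorSum s (k : ℕ)) - 1) := by
        refine sum_le_sum fun k _ => ?_
        rw [sum_congr rfl fun l hl => by
          rw [← primeDivisorSum_natAbs, (mem_filter.1 hl).2], sum_const, nsmul_eq_mul]
        exact mul_le_mul_of_nonneg_right (by exact_mod_cast hfiber k) (hnonneg k)
    _ ≤ 2 * (R * (exp (2 * a * exp (a / T) / T) - 1)) := by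
        rw [← mul_sum, sum_sub_distrib, sum_const, Nat.card_Icc, Nat.add_sub_cancel, nsmul_one,
          mul_sub_one]
        gcongr
        exact sum_exp_mul_primeDivisorSum_le hs ha hT hsT R

end PrimeDivisors

section Variance

/-- The arithmetic progression `n + q, n + 2q, …, n + Jq`. -/
def progression (n : ℤ) (q J : ℕ) : Finset ℤ := (Icc 1 J).image fun h : ℕ => n + q * h

lemma card_progression_le (n : ℤ) (q J : ℕ) : #(progression n q J) ≤ J :=
  card_image_le.trans_eq (by simp)

lemma injOn_emod_progression {p q J : ℕ} (hp : p.Prime) (hpq : ¬ p ∣ q) (hJ : J < p) (n : ℤ) :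
    Set.InjOn (· % (p : ℤ)) (progression n q J) := by
  intro a ha b hb hab
  obtain ⟨h₁, hh₁, rfl⟩ := mem_image.1 ha
  obtain ⟨h₂, hh₂, rfl⟩ := mem_image.1 hb
  rw [mem_Icc] at hh₁ hh₂
  have hdvd : (p : ℤ) ∣ q * ((h₂ : ℤ) - h₁) := by
    have := Int.ModEq.dvd hab
    rwa [add_sub_add_left_eq_sub, ← mul_sub] at this
  have hdvd' : (p : ℤ) ∣ (h₂ : ℤ) - h₁ :=
    ((Nat.prime_iff_prime_int.1 hp).dvd_or_dvd hdvd).resolve_left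
      fun h => hpq (Int.natCast_dvd_natCast.1 h)
  have hzero := Int.eq_zero_of_abs_lt_dvd hdvd' (by rw [abs_lt]; constructor <;> omega)
  rw [sub_eq_zero.1 hzero]

lemma card_add_card_le_residueCount_add {p q J : ℕ} (hp : p.Prime) (hpq : ¬ p ∣ q) (hJ : J < p)
    {n₁ n₂ : ℤ} {A₁ A₂ : Finset ℤ} (hA₁ : A₁ ⊆ progression n₁ q J)
    (hA₂ : A₂ ⊆ progression n₂ q J) :
    #A₁ + #A₂ ≤ residueCount p (A₁ ∪ A₂) +
      #{h ∈ Icc 1 J ×ˢ Icc 1 J | (p : ℤ) ∣ n₁ + q * h.1 - (n₂ + q * h.2)} := by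
  rw [← card_image_of_injOn ((injOn_emod_progression hp hpq hJ n₁).mono hA₁),
    ← card_image_of_injOn ((injOn_emod_progression hp hpq hJ n₂).mono hA₂),
    ← card_union_add_card_inter, ← image_union, residueCount]
  gcongr
  refine (card_le_card fun r hr => ?_).trans
    (card_image_le (f := fun h : ℕ × ℕ => (n₁ + (q : ℤ) * h.1) % p))
  obtain ⟨hr₁, hr₂⟩ := mem_inter.1 hr
  obtain ⟨a, ha, rfl⟩ := mem_image.1 hr₁
  obtain ⟨b, hb, hab⟩ := mem_image.1 hr₂
  obtain ⟨h₁, hh₁, rfl⟩ := mem_image.1 (hA₁ ha)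
  obtain ⟨h₂, hh₂, rfl⟩ := mem_image.1 (hA₂ hb)
  exact mem_image.2 ⟨(h₁, h₂), mem_filter.2
    ⟨mem_product.2 ⟨hh₁, hh₂⟩, Int.ModEq.dvd hab⟩, rfl⟩

variable {s : Finset ℕ} {q J : ℕ}

lemma expect_sieveWeight_mul_le_exp_sum (hs : ∀ p ∈ s, p.Prime) (hq : ∀ p ∈ s, ¬ p ∣ q)
    (hJ : ∀ p ∈ s, J < p) {n₁ n₂ : ℤ} {A₁ A₂ : Finset ℤ} (hA₁ : A₁ ⊆ progression n₁ q J)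
    (hA₂ : A₂ ⊆ progression n₂ q J) :
    𝔼 c ∈ range (∏ p ∈ s, p), sieveWeight s A₁ (c : ℕ) * sieveWeight s A₂ (c : ℕ) ≤
      exp (∑ h ∈ Icc 1 J ×ˢ Icc 1 J,
        2 * primeDivisorSum s (n₁ + q * h.1 - (n₂ + q * h.2))) := by
  refine (expect_sieveWeight_mul_le hs fun p hp =>
    card_add_card_le_residueCount_add (hs p hp) (hq p hp) (hJ p hp) hA₁ hA₂).trans_eq ?_
  simp only [primeDivisorSum, mul_sum, sum_filter]
  rw [sum_comm]
  congr 1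
  refine sum_congr rfl fun p _ => ?_
  rw [← sum_boole, sum_mul]
  refine sum_congr rfl fun h _ => ?_
  split_ifs <;> ring

lemma card_filter_not_disjoint_progression_le (I : Finset ℤ) (n : ℤ) (q J : ℕ) :
    #{m ∈ I | ¬ Disjoint (progression m q J) (progression n q J)} ≤ J ^ 2 := by
  calc _ ≤ #((Icc 1 J ×ˢ Icc 1 J).image fun h : ℕ × ℕ => n + (q : ℤ) * h.2 - q * h.1) := by
        refine card_le_card fun m hm => ?_
        obtain ⟨a, ha₁, ha₂⟩ := not_disjoint_iff.1 (mem_filter.1 hm).2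
        obtain ⟨h₁, hh₁, hm'⟩ := mem_image.1 ha₁
        obtain ⟨h₂, hh₂, hn'⟩ := mem_image.1 ha₂
        exact mem_image.2 ⟨(h₁, h₂), mem_product.2 ⟨hh₁, hh₂⟩,
          sub_eq_of_eq_add (hn'.trans hm'.symm)⟩
    _ ≤ J ^ 2 := card_image_le.trans_eq (by simp [sq])

variable {A : ℤ → Finset ℤ} {T : ℝ}

lemma sum_expect_sieveWeight_mul_sub_one_le (hs : ∀ p ∈ s, p.Prime) (hT : 0 < T)
    (hsT : ∀ p ∈ s, T < p) (hq : ∀ p ∈ s, ¬ p ∣ q) (hJT : (J : ℝ) ≤ T)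
    (hA : ∀ n, A n ⊆ progression n q J) {R : ℕ} {I : Finset ℤ} {n : ℤ}
    (hdisj : ∀ m ∈ I, Disjoint (progression m q J) (progression n q J))
    (hR : ∀ m ∈ I, ∀ a ∈ progression m q J, ∀ b ∈ progression n q J, |a - b| ≤ R) :
    ∑ m ∈ I, (𝔼 c ∈ range (∏ p ∈ s, p),
        sieveWeight s (A m) (c : ℕ) * sieveWeight s (A n) (c : ℕ) - 1) ≤
      2 * (R * (exp (4 * (J ^ 2 / T) * exp (2 * (J ^ 2 / T))) - 1)) := by
  have hJ : ∀ p ∈ s, J < p := fun p hp => by exact_mod_cast hJT.trans_lt (hsT p hp)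
  set Λ := Icc 1 J ×ˢ Icc 1 J with hΛ
  have hcard : (#Λ : ℝ) = J ^ 2 := by simp [hΛ, sq]
  set l : ℤ → ℕ × ℕ → ℤ := fun m h => m + q * h.1 - (n + q * h.2)
  have hbound_nonneg : 0 ≤ exp (4 * (J ^ 2 / T) * exp (2 * (J ^ 2 / T))) - 1 :=
    sub_nonneg.2 (one_le_exp (by positivity))
  have hshift : ∀ h ∈ Λ, ∑ m ∈ I, (exp (2 * J ^ 2 * primeDivisorSum s (l m h)) - 1) ≤
      2 * (R * (exp (4 * (J ^ 2 / T) * exp (2 * (J ^ 2 / T))) - 1)) := by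
    intro h hh
    obtain ⟨hh₁, hh₂⟩ := mem_product.1 hh
    have hinj : Set.InjOn (l · h) (I : Set ℤ) := fun a _ b _ hab => by
      simpa only [l, sub_left_inj, add_left_inj] using hab
    rw [← sum_image (g := (l · h)) (f := fun k => exp (2 * J ^ 2 * primeDivisorSum s k) - 1) hinj]
    refine (sum_exp_mul_primeDivisorSum_sub_one_le hs (by positivity) hT hsT (R := R)
      fun k hk => ?_).trans_eq (by ring_nf)
    obtain ⟨m, hm, rfl⟩ := mem_image.1 hk
    have ha := mem_image_of_mem (fun h : ℕ => m + (q : ℤ) * h) hh₁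
    have hb := mem_image_of_mem (fun h : ℕ => n + (q : ℤ) * h) hh₂
    exact ⟨sub_ne_zero.2 ((hdisj m hm).forall_ne_finset ha hb), hR m hm _ ha _ hb⟩
  calc _ ≤ ∑ m ∈ I, 𝔼 h ∈ Λ, (exp (2 * J ^ 2 * primeDivisorSum s (l m h)) - 1) := by
        refine sum_le_sum fun m _ => (sub_le_sub_right
          (expect_sieveWeight_mul_le_exp_sum hs hq hJ (hA m) (hA n)) 1).trans
          ((exp_sum_sub_one_le Λ _).trans_eq ?_)
        simp only [hcard, l]
        ring_nf
    _ = 𝔼 h ∈ Λ, ∑ m ∈ I, (exp (2 * J ^ 2 * primeDivisorSum s (l m h)) - 1) :=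
        (expect_sum_comm _ _ _).symm
    _ ≤ _ := by
        rcases Λ.eq_empty_or_nonempty with hempty | hne
        · rw [hempty, expect_empty]
          positivity
        · exact expect_le hne hshift

lemma sum_expect_sieveWeight_mul_le (hs : ∀ p ∈ s, p.Prime) (hT : 0 < T)
    (hsT : ∀ p ∈ s, T < p) (hq : ∀ p ∈ s, ¬ p ∣ q) (hJT : (J : ℝ) ≤ T)
    (hA : ∀ n, A n ⊆ progression n q J) {R : ℕ} {I : Finset ℤ} {n : ℤ}
    (hR : ∀ m ∈ I, ∀ a ∈ progression m q J, ∀ b ∈ progression n q J, |a - b| ≤ R) :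
    ∑ m ∈ I, 𝔼 c ∈ range (∏ p ∈ s, p),
        sieveWeight s (A n) (c : ℕ) * sieveWeight s (A m) (c : ℕ) ≤
      #I + (2 * (R * (exp (4 * (J ^ 2 / T) * exp (2 * (J ^ 2 / T))) - 1)) +
        J ^ 2 * exp (J * ∑ p ∈ s, 2 / (p : ℝ)) ^ 2) := by
  simp only [mul_comm (sieveWeight s (A n) _)]
  set E := exp (J * ∑ p ∈ s, 2 / (p : ℝ))
  set good := {m ∈ I | Disjoint (progression m q J) (progression n q J)}
  set bad := {m ∈ I | ¬ Disjoint (progression m q J) (progression n q J)}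
  have hweight : ∀ m c, sieveWeight s (A m) c ≤ E := fun m c =>
    (sieveWeight_le_exp hs _ c).trans <| exp_le_exp.2 <| by
      have : #(A m) ≤ J := (card_le_card (hA m)).trans (card_progression_le m q J)
      gcongr
  have hgood := sum_expect_sieveWeight_mul_sub_one_le (I := good) (n := n) hs hT hsT hq hJT hA
    (fun m hm => (mem_filter.1 hm).2) fun m hm => hR m (mem_filter.1 hm).1
  rw [sum_sub_distrib, sum_const, nsmul_one] at hgood
  have hgood_card : (#good : ℝ) ≤ #I := by exact_mod_cast card_filter_le _ _
  have hpoint : ∀ m ∈ bad, 𝔼 c ∈ range (∏ p ∈ s, p),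
      sieveWeight s (A m) (c : ℕ) * sieveWeight s (A n) (c : ℕ) ≤ E ^ 2 := fun m _ =>
    expect_le (nonempty_range_iff.2 (prod_ne_zero_iff.2 fun p hp => (hs p hp).ne_zero))
      fun c _ => (mul_le_mul (hweight m _) (hweight n _) (sieveWeight_nonneg hs _ _)
        (exp_pos _).le).trans_eq (sq E).symm
  have hbad := sum_le_card_nsmul bad _ _ hpoint
  rw [nsmul_eq_mul] at hbad
  have hbad_card : (#bad : ℝ) * E ^ 2 ≤ J ^ 2 * E ^ 2 := by
    gcongr
    exact_mod_cast card_filter_not_disjoint_progression_le I n q J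
  rw [← sum_filter_add_sum_filter_not I
    fun m => Disjoint (progression m q J) (progression n q J)]
  linarith

lemma expect_sq_sum_sieveWeight_sub_card_le (hs : ∀ p ∈ s, p.Prime) (hT : 0 < T)
    (hsT : ∀ p ∈ s, T < p) (hq : ∀ p ∈ s, ¬ p ∣ q) (hJT : (J : ℝ) ≤ T)
    (hA : ∀ n, A n ⊆ progression n q J) {R : ℕ} {I : Finset ℤ}
    (hR : ∀ m ∈ I, ∀ n ∈ I, ∀ a ∈ progression m q J, ∀ b ∈ progression n q J, |a - b| ≤ R) :
    𝔼 c ∈ range (∏ p ∈ s, p), (∑ n ∈ I, sieveWeight s (A n) (c : ℕ) - #I) ^ 2 ≤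
      #I * (2 * (R * (exp (4 * (J ^ 2 / T) * exp (2 * (J ^ 2 / T))) - 1)) +
        J ^ 2 * exp (J * ∑ p ∈ s, 2 / (p : ℝ)) ^ 2 + 2 * #I * (2 * J ^ 2 / T)) := by
  refine expect_sq_sum_sub_card_le
    (nonempty_range_iff.2 (prod_ne_zero_iff.2 fun p hp => (hs p hp).ne_zero)) I
    (fun n c => sieveWeight s (A n) c) (fun n _ => ?_)
    fun n hn => sum_expect_sieveWeight_mul_le hs hT hsT hq hJT hA fun m hm => hR m hm n hn
  have hcard : (#(A n) : ℝ) ≤ J := by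
    exact_mod_cast (card_le_card (hA n)).trans (card_progression_le n q J)
  calc 1 - 2 * (J : ℝ) ^ 2 / T ≤ 1 - 2 * (#(A n) : ℝ) ^ 2 / T := by gcongr
    _ ≤ _ := one_sub_sq_div_le_expect_sieveWeight hs hT hsT (hcard.trans hJT)

end Variance

section PrimeReciprocals

lemma sum_one_div_primes_Ioc_two_pow_le (m : ℕ) :
    ∑ p ∈ Ioc (2 ^ m) (2 ^ (m + 1)) with Nat.Prime p, 1 / (p : ℝ) ≤ 8 / (m + 1) := by
  have : 0 < log 2 := log_pos one_lt_two
  have hterm : ∀ p ∈ {p ∈ Ioc (2 ^ m) (2 ^ (m + 1)) | Nat.Prime p},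
      1 / (p : ℝ) ≤ log p * (2 / (2 ^ m * (m + 1) * log 2)) := by
    intro p hp
    obtain ⟨hpm, hpp⟩ := mem_filter.1 hp
    have hle : (2 : ℝ) ^ m ≤ p := by exact_mod_cast (mem_Ioc.1 hpm).1.le
    have htwo : (2 : ℝ) ≤ p := by exact_mod_cast hpp.two_le
    have hlog : (m + 1) * log 2 ≤ 2 * log p := by
      calc (m + 1) * log 2 = log (2 ^ m * 2) := by rw [← pow_succ, log_pow, Nat.cast_succ]
        _ ≤ log (p * p) := by gcongr
        _ = 2 * log p := by rw [← sq, log_pow, Nat.cast_two]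
    rw [mul_div_assoc', div_le_div_iff₀ (by positivity) (by positivity), one_mul]
    calc 2 ^ m * ((m : ℝ) + 1) * log 2 = 2 ^ m * ((m + 1) * log 2) := by ring
      _ ≤ p * (2 * log p) := by gcongr
      _ = log p * 2 * p := by ring
  have htheta : ∑ p ∈ Ioc (2 ^ m) (2 ^ (m + 1)) with Nat.Prime p, log p ≤ log 4 * 2 ^ (m + 1) := by
    refine le_trans ?_ (Chebyshev.theta_le_log4_mul_x (x := 2 ^ (m + 1)) (by positivity))
    have hfloor : ⌊(2 : ℝ) ^ (m + 1)⌋₊ = 2 ^ (m + 1) := by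
      exact_mod_cast Nat.floor_natCast (R := ℝ) (2 ^ (m + 1))
    rw [Chebyshev.theta, hfloor]
    exact sum_le_sum_of_subset_of_nonneg
      (filter_subset_filter _ (Ioc_subset_Ioc_left (Nat.zero_le _)))
      fun p _ _ => log_natCast_nonneg p
  have hlog4 : log 4 = 2 * log 2 := by
    rw [show (4 : ℝ) = 2 ^ 2 by norm_num, log_pow, Nat.cast_two]
  calc _ ≤ ∑ p ∈ Ioc (2 ^ m) (2 ^ (m + 1)) with Nat.Prime p,
        log p * (2 / (2 ^ m * (m + 1) * log 2)) := sum_le_sum hterm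
    _ ≤ log 4 * 2 ^ (m + 1) * (2 / (2 ^ m * (m + 1) * log 2)) := by
        rw [← sum_mul]
        gcongr
    _ = 8 / (m + 1) := by
        rw [hlog4, pow_succ]
        field_simp
        norm_num

lemma sum_one_div_primes_Ioc_one_two_pow_le (m : ℕ) :
    ∑ p ∈ Ioc 1 (2 ^ m) with Nat.Prime p, 1 / (p : ℝ) ≤ 8 * (harmonic m : ℝ) := by
  induction m with
  | zero => simp
  | succ m ih =>
    have hblock := sum_one_div_primes_Ioc_two_pow_le m
    rw [sum_filter] at ih hblock ⊢
    rw [← sum_Ioc_consecutive _ Nat.one_le_two_pow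
      (Nat.pow_le_pow_right two_pos m.le_succ), harmonic_succ]
    push_cast
    rw [mul_add, ← div_eq_mul_inv]
    exact add_le_add ih hblock

lemma sum_one_div_primes_le {s : Finset ℕ} (hs : ∀ p ∈ s, p.Prime) {L : ℝ} (hL : 1 ≤ L)
    (hsL : ∀ p ∈ s, (p : ℝ) ≤ exp L) :
    ∑ p ∈ s, 1 / (p : ℝ) ≤ 8 * (1 + log (3 * L)) := by
  set m := ⌈2 * L⌉₊
  have hm_ge : 2 * L ≤ m := Nat.le_ceil _
  have hm_le : (m : ℝ) ≤ 3 * L := by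
    have := Nat.ceil_lt_add_one (show 0 ≤ 2 * L by linarith)
    linarith
  have hpow : exp L ≤ 2 ^ m :=
    calc exp L ≤ exp (m * log 2) := exp_le_exp.2 (by nlinarith [log_two_gt_d9])
      _ = 2 ^ m := by rw [exp_nat_mul, exp_log two_pos]
  have hsub : s ⊆ {p ∈ Ioc 1 (2 ^ m) | Nat.Prime p} := fun p hp =>
    mem_filter.2 ⟨mem_Ioc.2 ⟨(hs p hp).one_lt, by exact_mod_cast (hsL p hp).trans hpow⟩, hs p hp⟩
  calc ∑ p ∈ s, 1 / (p : ℝ) ≤ ∑ p ∈ Ioc 1 (2 ^ m) with Nat.Prime p, 1 / (p : ℝ) :=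
        sum_le_sum_of_subset_of_nonneg hsub fun _ _ _ => by positivity
    _ ≤ 8 * (harmonic m : ℝ) := sum_one_div_primes_Ioc_one_two_pow_le m
    _ ≤ 8 * (1 + log m) := by
        gcongr
        exact harmonic_le_one_add_log m
    _ ≤ 8 * (1 + log (3 * L)) := by gcongr

end PrimeReciprocals

section Asymptotics

lemma eventually_mul_rpow_mul_exp_le (k a c : ℝ) :
    ∀ᶠ L : ℝ in atTop, k * L ^ a * exp (c * (√L * (1 + log (6 * L)))) ≤ exp (L / 2) := by
  have hlog : (fun L : ℝ => √L * (1 + log (6 * L))) =o[atTop] fun L => L := by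
    have hconst : (fun _ : ℝ => 1 + log 6) =o[atTop] fun L => √L :=
      Asymptotics.isLittleO_const_left.2
        (.inr (tendsto_norm_atTop_atTop.comp tendsto_sqrt_atTop))
    have hlog_sqrt : (fun L : ℝ => log L) =o[atTop] fun L => √L := by
      simpa only [sqrt_eq_rpow] using isLittleO_log_rpow_atTop (half_pos one_pos)
    refine ((Asymptotics.isBigO_refl (fun L : ℝ => √L) atTop).mul_isLittleO
      (hconst.add hlog_sqrt)).congr' ?_ ?_
    · filter_upwards [eventually_gt_atTop 0] with L hL
      rw [log_mul (by norm_num) hL.ne', add_assoc]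
    · filter_upwards [eventually_ge_atTop 0] with L hL using mul_self_sqrt hL
  have hsum := ((Asymptotics.isLittleO_const_id_atTop k).add
    (isLittleO_log_id_atTop.const_mul_left a)).add (hlog.const_mul_left c)
  filter_upwards [hsum.bound (half_pos one_pos), eventually_gt_atTop 0] with L hL hL0
  rw [rpow_def_of_pos hL0]
  calc k * exp (log L * a) * exp (c * (√L * (1 + log (6 * L))))
      ≤ exp k * exp (log L * a) * exp (c * (√L * (1 + log (6 * L)))) := by
        gcongr
        linarith [add_one_le_exp k]
    _ = exp (k + a * log L + c * (√L * (1 + log (6 * L)))) := by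
        rw [← exp_add, ← exp_add, mul_comm a]
    _ ≤ exp (L / 2) := by
        rw [exp_le_exp]
        refine (le_norm_self _).trans (hL.trans_eq ?_)
        rw [id_eq, norm_of_nonneg hL0.le]
        ring

end Asymptotics

section Weights

variable {w t : ℝ} {p : ℕ}

lemma mem_primesUpTo : p ∈ primesUpTo t ↔ p.Prime ∧ (p : ℝ) ≤ t := by
  rw [primesUpTo, mem_filter, mem_range, Order.lt_add_one_iff, and_iff_right_iff_imp]
  exact fun hp => Nat.le_floor hp.2

lemma mem_primesBetween : p ∈ primesBetween w t ↔ p.Prime ∧ w < (p : ℝ) ∧ (p : ℝ) ≤ t := by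
  rw [primesBetween, mem_filter, mem_range, Order.lt_add_one_iff, and_iff_right_iff_imp]
  exact fun hp => Nat.le_floor hp.2.2

lemma disjoint_primesUpTo_primesBetween (w t : ℝ) :
    Disjoint (primesUpTo w) (primesBetween w t) :=
  disjoint_left.2 fun _ hp hpt =>
    (mem_primesBetween.1 hpt).2.1.not_ge (mem_primesUpTo.1 hp).2

lemma primesUpTo_union_primesBetween (hwt : w ≤ t) :
    primesUpTo w ∪ primesBetween w t = primesUpTo t := by
  ext p
  simp only [mem_union, mem_primesUpTo, mem_primesBetween]
  have : (p : ℝ) ≤ w → (p : ℝ) ≤ t := hwt.trans'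
  have := le_or_gt (p : ℝ) w
  tauto

lemma PP_mul_prod_primesBetween (hwt : w ≤ t) : PP w * ∏ p ∈ primesBetween w t, p = PP t := by
  rw [PP, PP, ← primesUpTo_union_primesBetween hwt,
    prod_union (disjoint_primesUpTo_primesBetween w t)]

lemma PP_ne_zero (t : ℝ) : PP t ≠ 0 :=
  prod_ne_zero_iff.2 fun _ hp => (mem_primesUpTo.1 hp).1.ne_zero

lemma coprime_PP_prod_primesBetween (w t : ℝ) :
    (PP w).Coprime (∏ p ∈ primesBetween w t, p) :=
  Nat.Coprime.prod_left fun _ hp => Nat.Coprime.prod_right fun _ hr =>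
    (Nat.coprime_primes (mem_primesUpTo.1 hp).1 (mem_primesBetween.1 hr).1).2 fun hpr =>
      disjoint_left.1 (disjoint_primesUpTo_primesBetween w t) hp (hpr ▸ hr)

lemma EE_eq_expect (δ x : ℝ) (g : ℤ → ℝ) :
    EE δ x g = 𝔼 b ∈ range (PP (zz δ x)), g (b : ℕ) := by
  rw [EE, expect_eq_sum_div_card, card_range, one_div, inv_mul_eq_div]

lemma inS_add_PP (t : ℝ) (b n : ℤ) : inS t (b + PP t) n ↔ inS t b n := by
  refine forall_congr' fun p => forall₂_congr fun hp hpt => not_congr ?_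
  rw [← sub_sub]
  exact dvd_sub_left (Int.natCast_dvd_natCast.2
    (dvd_prod_of_mem _ (mem_primesUpTo.2 ⟨hp, hpt⟩)))

variable (M : ℝ) (K : ℕ) (b : ℤ) (H : ℝ) (q : ℕ) (n : ℤ)

lemma APset_add_PP : APset M K (b + PP (H ^ M)) H q n = APset M K b H q n :=
  filter_congr fun m _ => inS_add_PP (H ^ M) b m

lemma APset_subset_progression : APset M K b H q n ⊆ progression n q ⌊(K : ℝ) * H⌋₊ :=
  filter_subset _ _

lemma lam_eq_sieveWeight (t : ℝ) :
    lam M t K b H q n = sieveWeight (primesBetween (H ^ M) t) (APset M K b H q n) b := by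
  have havoids : (∀ m ∈ APset M K b H q n, inSBetween (H ^ M) t b m) ↔
      Avoids (primesBetween (H ^ M) t) (APset M K b H q n) b := by
    simp only [Avoids, mem_primesBetween, inSBetween]
    exact ⟨fun h p hp m hm => h m hm p hp.1 hp.2.1 hp.2.2,
      fun h m hm p hp hwp hpt => h p ⟨hp, hwp, hpt⟩ m hm⟩
  simp only [lam, sieveWeight, havoids, sigBetween]

end Weights

section SecondMoment

variable {M t H : ℝ} {K q : ℕ}

lemma expect_sq_sum_lam_sub_card_le (hH : 0 < H) (hHt : H ^ M ≤ t) (hq : q.Prime) (htq : t < q)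
    (hJ : (⌊(K : ℝ) * H⌋₊ : ℝ) ≤ H ^ M) {R : ℕ} {I : Finset ℤ}
    (hR : ∀ m ∈ I, ∀ n ∈ I, ∀ a ∈ progression m q ⌊(K : ℝ) * H⌋₊,
      ∀ b ∈ progression n q ⌊(K : ℝ) * H⌋₊, |a - b| ≤ R) :
    𝔼 b ∈ range (PP t), (∑ n ∈ I, lam M t K (b : ℕ) H q n - #I) ^ 2 ≤
      #I * (2 * (R * (exp (4 * (⌊(K : ℝ) * H⌋₊ ^ 2 / H ^ M) *
          exp (2 * (⌊(K : ℝ) * H⌋₊ ^ 2 / H ^ M))) - 1)) +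
        ⌊(K : ℝ) * H⌋₊ ^ 2 *
          exp (⌊(K : ℝ) * H⌋₊ * ∑ p ∈ primesBetween (H ^ M) t, 2 / (p : ℝ)) ^ 2 +
        2 * #I * (2 * ⌊(K : ℝ) * H⌋₊ ^ 2 / H ^ M)) := by
  have hs : ∀ p ∈ primesBetween (H ^ M) t, p.Prime := fun p hp => (mem_primesBetween.1 hp).1
  have hs0 : ∏ p ∈ primesBetween (H ^ M) t, p ≠ 0 :=
    prod_ne_zero_iff.2 fun p hp => (hs p hp).ne_zero
  have hqs : ∀ p ∈ primesBetween (H ^ M) t, ¬ p ∣ q := fun p hp hpq => by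
    rw [(Nat.prime_dvd_prime_iff_eq (hs p hp) hq).1 hpq] at hp
    exact htq.not_ge (mem_primesBetween.1 hp).2.2
  simp only [lam_eq_sieveWeight]
  rw [← PP_mul_prod_primesBetween hHt, expect_range_mul_of_coprime
    (coprime_PP_prod_primesBetween (H ^ M) t) (PP_ne_zero _) hs0
    (F := fun a c => (∑ n ∈ I, sieveWeight (primesBetween (H ^ M) t)
      (APset M K (a : ℕ) H q n) (c : ℕ) - #I) ^ 2)
    (fun c a => by simp only [Nat.cast_add, APset_add_PP])
    (fun a c => by
      simp only [Nat.cast_add, sieveWeight_add_natCast fun _ hp => dvd_prod_of_mem _ hp])]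
  exact expect_le (nonempty_range_iff.2 (PP_ne_zero _)) fun a _ =>
    expect_sq_sum_sieveWeight_sub_card_le hs (rpow_pos_of_pos hH M)
      (fun p hp => (mem_primesBetween.1 hp).2.1) hqs hJ
      (fun n => APset_subset_progression M K a H q n) hR

lemma abs_sub_le_of_mem_progression {y J : ℕ} (hqJ : q * J ≤ K * y) {m n a b : ℤ}
    (hm : m ∈ Ioc (-((K * y : ℕ) : ℤ)) (y : ℤ)) (hn : n ∈ Ioc (-((K * y : ℕ) : ℤ)) (y : ℤ))
    (ha : a ∈ progression m q J) (hb : b ∈ progression n q J) :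
    |a - b| ≤ ((2 * K + 1) * y : ℕ) := by
  obtain ⟨h₁, hh₁, rfl⟩ := mem_image.1 ha
  obtain ⟨h₂, hh₂, rfl⟩ := mem_image.1 hb
  rw [mem_Ioc] at hm hn
  have hle₁ : q * h₁ ≤ K * y := (Nat.mul_le_mul_left q (mem_Icc.1 hh₁).2).trans hqJ
  have hle₂ : q * h₂ ≤ K * y := (Nat.mul_le_mul_left q (mem_Icc.1 hh₂).2).trans hqJ
  zify at hle₁ hle₂
  have h0₁ : (0 : ℤ) ≤ q * h₁ := by positivity
  have h0₂ : (0 : ℤ) ≤ q * h₂ := by positivity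
  push_cast at hm hn ⊢
  rw [abs_le]
  constructor <;> linarith

lemma card_Ioc_neg_mul (K y : ℕ) :
    (#(Ioc (-((K * y : ℕ) : ℤ)) (y : ℤ)) : ℝ) = ((K : ℝ) + 1) * y := by
  have hlen : (y : ℤ) - -((K * y : ℕ) : ℤ) = (((K + 1) * y : ℕ) : ℤ) := by
    push_cast
    ring
  rw [Int.card_Ioc, hlen, Int.toNat_natCast]
  push_cast
  ring

lemma exp_mul_exp_sub_one_le {k g u : ℝ} (hk : 0 ≤ k) (hg : 0 ≤ g) (hg1 : g ≤ 1)
    (huk : u ≤ k * g) :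
    exp (4 * u * exp (2 * u)) - 1 ≤
      4 * k * exp (2 * k) * exp (4 * k * exp (2 * k)) * g := by
  have huk' : u ≤ k := huk.trans (mul_le_of_le_one_right hk hg1)
  calc exp (4 * u * exp (2 * u)) - 1
      ≤ 4 * u * exp (2 * u) * exp (4 * u * exp (2 * u)) := exp_sub_one_le_mul_exp _
    _ ≤ 4 * (k * g) * exp (2 * k) * exp (4 * k * exp (2 * k)) := by gcongr
    _ = 4 * k * exp (2 * k) * exp (4 * k * exp (2 * k)) * g := by ring

/-- The implied constant, a function of `K` alone, of the second moment bound
`expect_sq_sum_lam_sub_le`. -/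
noncomputable def secondMomentConst (K : ℕ) : ℝ :=
  4 * (4 * K ^ 2 * exp (2 * K ^ 2) * exp (4 * K ^ 2 * exp (2 * K ^ 2))) + 1 + 4 * K ^ 2

lemma mul_add_le_secondMomentConst_mul {g u N R D : ℝ} (hu : 0 ≤ u) (hg : 0 ≤ g) (hg1 : g ≤ 1)
    (huK : u ≤ K ^ 2 * g) (hN : 0 ≤ N) (hR : R ≤ 2 * N) (hD : D ≤ N * g) :
    N * (2 * (R * (exp (4 * u * exp (2 * u)) - 1)) + D + 2 * N * (2 * u)) ≤
      secondMomentConst K * N ^ 2 * g := by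
  have hexp := exp_mul_exp_sub_one_le (sq_nonneg (K : ℝ)) hg hg1 huK
  have hexp0 : 0 ≤ exp (4 * u * exp (2 * u)) - 1 := sub_nonneg.2 (one_le_exp (by positivity))
  calc N * (2 * (R * (exp (4 * u * exp (2 * u)) - 1)) + D + 2 * N * (2 * u))
      ≤ N * (2 * (2 * N * (4 * K ^ 2 * exp (2 * K ^ 2) * exp (4 * K ^ 2 * exp (2 * K ^ 2)) * g)) +
          N * g + 2 * N * (2 * (K ^ 2 * g))) := by gcongr
    _ = secondMomentConst K * N ^ 2 * g := by
        rw [secondMomentConst]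
        ring

lemma floor_mul_le_rpow (hM : 2 ≤ M) (hH : 1 ≤ H) (hKH : K ≤ H) :
    (⌊(K : ℝ) * H⌋₊ : ℝ) ≤ H ^ M :=
  calc (⌊(K : ℝ) * H⌋₊ : ℝ) ≤ K * H := Nat.floor_le (by positivity)
    _ ≤ H * H := by gcongr
    _ = H ^ (2 : ℝ) := by rw [rpow_two, sq]
    _ ≤ H ^ M := by gcongr

lemma sq_floor_mul_le (hH : 0 < H) :
    (⌊(K : ℝ) * H⌋₊ : ℝ) ^ 2 ≤ K ^ 2 * (H ^ M * H ^ (2 - M)) := by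
  rw [← rpow_add hH, add_sub_cancel, rpow_two, ← mul_pow]
  gcongr
  exact Nat.floor_le (by positivity)

lemma mul_floor_mul_le {y : ℕ} (hH : 0 < H) (hqy : (q : ℝ) ≤ y / H) :
    q * ⌊(K : ℝ) * H⌋₊ ≤ K * y := by
  have : (q : ℝ) * ⌊(K : ℝ) * H⌋₊ ≤ K * y :=
    calc (q : ℝ) * ⌊(K : ℝ) * H⌋₊ ≤ y / H * (K * H) := by
          gcongr
          exact Nat.floor_le (by positivity)
      _ = K * y := by field_simp
  exact_mod_cast this

lemma expect_sq_sum_lam_sub_le {y : ℕ} (hM : 2 ≤ M) (hH : 1 ≤ H) (hKH : K ≤ H) (hHt : H ^ M ≤ t)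
    (hq : q.Prime) (htq : t < q) (hqy : (q : ℝ) ≤ y / H)
    (hdiag : (K : ℝ) ^ 2 * H ^ M *
      exp (K * H * ∑ p ∈ primesBetween (H ^ M) t, 2 / (p : ℝ)) ^ 2 ≤ y) :
    𝔼 b ∈ range (PP t), (∑ n ∈ Ioc (-((K * y : ℕ) : ℤ)) (y : ℤ), lam M t K (b : ℕ) H q n -
        ((K : ℝ) + 1) * y) ^ 2 ≤
      secondMomentConst K * (((K : ℝ) + 1) * y) ^ 2 * H ^ (2 - M) := by
  have hH0 : 0 < H := by linarith
  set J := ⌊(K : ℝ) * H⌋₊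
  set g := H ^ (2 - M)
  have hg1 : g ≤ 1 := rpow_le_one_of_one_le_of_nonpos hH (by linarith)
  have hJ : (J : ℝ) ≤ K * H := Nat.floor_le (by positivity)
  have hJsq : (J : ℝ) ^ 2 ≤ K ^ 2 * (H ^ M * g) := sq_floor_mul_le hH0
  have hu : (J : ℝ) ^ 2 / H ^ M ≤ K ^ 2 * g := by
    rw [div_le_iff₀ (rpow_pos_of_pos hH0 M)]
    linarith
  have hmoment := expect_sq_sum_lam_sub_card_le hH0 hHt hq htq (floor_mul_le_rpow hM hH hKH)
    fun m hm n hn a ha b hb =>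
      abs_sub_le_of_mem_progression (mul_floor_mul_le hH0 hqy) hm hn ha hb
  rw [card_Ioc_neg_mul] at hmoment
  refine (hmoment.trans_eq (by rw [mul_div_assoc])).trans
    (mul_add_le_secondMomentConst_mul (by positivity) (by positivity) hg1 hu (by positivity) ?_ ?_)
  · push_cast
    linarith [Nat.cast_nonneg (α := ℝ) y]
  · have : 0 ≤ ∑ p ∈ primesBetween (H ^ M) t, 2 / (p : ℝ) :=
      sum_nonneg fun _ _ => by positivity
    calc (J : ℝ) ^ 2 * exp (J * ∑ p ∈ primesBetween (H ^ M) t, 2 / (p : ℝ)) ^ 2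
        ≤ K ^ 2 * (H ^ M * g) *
            exp (K * H * ∑ p ∈ primesBetween (H ^ M) t, 2 / (p : ℝ)) ^ 2 := by gcongr
      _ = K ^ 2 * H ^ M *
            exp (K * H * ∑ p ∈ primesBetween (H ^ M) t, 2 / (p : ℝ)) ^ 2 * g := by ring
      _ ≤ y * g := by gcongr
      _ ≤ ((K : ℝ) + 1) * y * g := by
        gcongr
        exact le_mul_of_one_le_left (by positivity) (by linarith [Nat.cast_nonneg (α := ℝ) K])

end SecondMoment

section Parameters

lemma eventually_exp_half_log_le_yy (δ : ℝ) : ∀ᶠ x in atTop, exp (log x / 2) ≤ yy δ x := by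
  filter_upwards [tendsto_log_atTop.eventually (eventually_mul_rpow_mul_exp_le 1 (-δ) 0),
    tendsto_log_atTop.eventually_gt_atTop 0, eventually_gt_atTop 0] with x hrpow hL hx
  rw [one_mul, zero_mul, exp_zero, mul_one, rpow_neg hL.le, inv_le_iff_one_le_mul₀' (by positivity)]
    at hrpow
  calc exp (log x / 2) ≤ log x ^ δ * exp (log x / 2) * exp (log x / 2) :=
        le_mul_of_one_le_left (exp_pos _).le hrpow
    _ = x * log x ^ δ := by rw [mul_assoc, ← exp_add, add_halves, exp_log hx, mul_comm]
    _ ≤ yy δ x := Nat.le_ceil _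

lemma eventually_yy_le_exp_two_mul_log (δ : ℝ) : ∀ᶠ x in atTop, yy δ x ≤ exp (2 * log x) := by
  filter_upwards [tendsto_log_atTop.eventually (eventually_mul_rpow_mul_exp_le 2 δ 0),
    tendsto_log_atTop.eventually_gt_atTop 0, eventually_ge_atTop 2] with x hrpow hL hx
  rw [zero_mul, exp_zero, mul_one] at hrpow
  have hexp : exp (log x) = x := exp_log (by linarith)
  have hrpow' : 2 * log x ^ δ ≤ x :=
    calc 2 * log x ^ δ ≤ exp (log x / 2) := hrpow
      _ ≤ exp (log x) := exp_le_exp.2 (by linarith)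
      _ = x := hexp
  calc (yy δ x : ℝ) ≤ x * log x ^ δ + 1 := (Nat.ceil_lt_add_one (by positivity)).le
    _ ≤ x * x := by nlinarith
    _ = exp (2 * log x) := by rw [two_mul, exp_add, hexp]

lemma eventually_yy_div_sqrt_log_le_zz (δ : ℝ) :
    ∀ᶠ x in atTop, yy δ x / √(log x) ≤ zz δ x := by
  filter_upwards [(tendsto_log_atTop.comp tendsto_log_atTop).eventually_ge_atTop 1,
    tendsto_log_atTop.eventually_gt_atTop 0] with x hx hL
  rw [zz, sqrt_eq_rpow]
  exact div_le_div_of_nonneg_right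
    (le_mul_of_one_le_right (Nat.cast_nonneg _) (one_le_pow₀ hx)) (by positivity)

lemma eventually_zz_le_yy (δ : ℝ) : ∀ᶠ x in atTop, zz δ x ≤ yy δ x := by
  have hloglog : ∀ᶠ L in atTop, log L ^ 2 ≤ L ^ (1 / 2 : ℝ) := by
    have := (isLittleO_pow_log_id_atTop (n := 4)).bound one_pos
    filter_upwards [this, eventually_gt_atTop 0] with L hL hL0
    rw [id_eq, one_mul, norm_of_nonneg hL0.le, norm_of_nonneg (by positivity)] at hL
    rw [← sqrt_eq_rpow]
    exact le_sqrt_of_sq_le (by linarith)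
  filter_upwards [tendsto_log_atTop.eventually hloglog, tendsto_log_atTop.eventually_gt_atTop 0]
    with x hx hL
  rw [zz, div_le_iff₀ (by positivity)]
  gcongr

variable {δ ξ x H : ℝ}

lemma one_le_of_mem_frakH (hξ : 1 ≤ ξ) (hH : H ∈ frakH δ ξ x) : 1 ≤ H := by
  obtain ⟨j, rfl, -⟩ := hH
  exact one_le_pow₀ hξ

lemma zz_le_div_of_mem_frakH (hξ : 0 < ξ) (hz : 0 < zz δ x) (hH0 : 0 < H)
    (hH : H ∈ frakH δ ξ x) : zz δ x ≤ yy δ x / (ξ * H) := by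
  obtain ⟨j, -, -, hle⟩ := hH
  rw [le_div_iff₀ (by positivity)] at hle ⊢
  linarith

lemma le_sqrt_log_of_mem_frakH (hξ : 1 ≤ ξ) (hz : 0 < zz δ x)
    (hyz : yy δ x / √(log x) ≤ zz δ x) (hL : 0 < log x) (hH : H ∈ frakH δ ξ x) :
    H ≤ √(log x) := by
  obtain ⟨j, -, -, hle⟩ := hH
  rw [div_le_iff₀ (by positivity)] at hyz
  calc H ≤ yy δ x / (ξ * zz δ x) := hle
    _ ≤ yy δ x / zz δ x := by
        gcongr
        exact le_mul_of_one_le_left hz.le hξ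
    _ ≤ √(log x) := by rwa [div_le_iff₀' hz]

lemma eventually_zz_pos (δ : ℝ) : ∀ᶠ x in atTop, 0 < zz δ x := by
  filter_upwards [eventually_exp_half_log_le_yy δ, eventually_yy_div_sqrt_log_le_zz δ,
    tendsto_log_atTop.eventually_gt_atTop 0] with x hy hz hL
  exact (div_pos ((exp_pos _).trans_le hy) (sqrt_pos.2 hL)).trans_le hz

lemma eventually_forall_mem_frakH_le_sqrt_log (δ : ℝ) (hξ : 1 ≤ ξ) :
    ∀ᶠ x in atTop, ∀ H ∈ frakH δ ξ x, H ≤ √(log x) := by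
  filter_upwards [eventually_zz_pos δ, eventually_yy_div_sqrt_log_le_zz δ,
    tendsto_log_atTop.eventually_gt_atTop 0] with x hz hyz hL H hH
  exact le_sqrt_log_of_mem_frakH hξ hz hyz hL hH

lemma eventually_forall_mem_frakH_rpow_le_zz (δ : ℝ) (hξ : 1 ≤ ξ) {M : ℝ} (hM : 0 ≤ M) :
    ∀ᶠ x in atTop, ∀ H ∈ frakH δ ξ x, H ^ M ≤ zz δ x := by
  filter_upwards [eventually_forall_mem_frakH_le_sqrt_log δ hξ,
    eventually_exp_half_log_le_yy δ, eventually_yy_div_sqrt_log_le_zz δ,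
    tendsto_log_atTop.eventually (eventually_mul_rpow_mul_exp_le 1 ((M + 1) / 2) 0),
    tendsto_log_atTop.eventually_gt_atTop 0] with x hHL hy hyz hrpow hL H hH
  have hH1 := one_le_of_mem_frakH hξ hH
  rw [one_mul, zero_mul, exp_zero, mul_one] at hrpow
  calc H ^ M ≤ √(log x) ^ M := by
        gcongr
        exact hHL H hH
    _ = log x ^ ((M + 1) / 2) / √(log x) := by
        rw [sqrt_eq_rpow, ← rpow_mul hL.le, ← rpow_sub hL]
        ring_nf
    _ ≤ yy δ x / √(log x) := by
        gcongr
        exact hrpow.trans hy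
    _ ≤ zz δ x := hyz

lemma sum_two_div_primesBetween_le {w t : ℝ} (hL : 1 ≤ log x) (ht : t ≤ exp (2 * log x)) :
    ∑ p ∈ primesBetween w t, 2 / (p : ℝ) ≤ 16 * (1 + log (6 * log x)) := by
  have hsum := sum_one_div_primes_le (s := primesBetween w t) (L := 2 * log x)
    (fun p hp => (mem_primesBetween.1 hp).1) (by linarith)
    fun p hp => (mem_primesBetween.1 hp).2.2.trans ht
  calc ∑ p ∈ primesBetween w t, 2 / (p : ℝ) = 2 * ∑ p ∈ primesBetween w t, 1 / (p : ℝ) := by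
        rw [mul_sum]
        exact sum_congr rfl fun p _ => by ring
    _ ≤ 2 * (8 * (1 + log (3 * (2 * log x)))) := by gcongr
    _ = 16 * (1 + log (6 * log x)) := by ring_nf

lemma eventually_forall_mem_frakH_diagonal_le (δ : ℝ) (hξ : 1 ≤ ξ) {M : ℝ} (hM : 0 ≤ M)
    (K : ℕ) : ∀ᶠ x in atTop, ∀ H ∈ frakH δ ξ x, (K : ℝ) ^ 2 * H ^ M *
      exp (K * H * ∑ p ∈ primesBetween (H ^ M) (zz δ x), 2 / (p : ℝ)) ^ 2 ≤ yy δ x := by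
  filter_upwards [eventually_forall_mem_frakH_le_sqrt_log δ hξ,
    eventually_exp_half_log_le_yy δ, eventually_yy_le_exp_two_mul_log δ, eventually_zz_le_yy δ,
    tendsto_log_atTop.eventually (eventually_mul_rpow_mul_exp_le (K ^ 2) (M / 2) (32 * K)),
    tendsto_log_atTop.eventually_ge_atTop 1] with x hHL hy hyx hzy hrpow hL H hH
  have hH1 := one_le_of_mem_frakH hξ hH
  have hHL := hHL H hH
  have hsum := sum_two_div_primesBetween_le (w := H ^ M) hL (hzy.trans hyx)
  have hHM : H ^ M ≤ log x ^ (M / 2) := by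
    rw [div_eq_inv_mul, rpow_mul (by linarith), ← one_div, ← sqrt_eq_rpow]
    gcongr
  calc _ ≤ (K : ℝ) ^ 2 * log x ^ (M / 2) *
        exp (K * √(log x) * (16 * (1 + log (6 * log x)))) ^ 2 := by gcongr
    _ = (K : ℝ) ^ 2 * log x ^ (M / 2) *
        exp (32 * K * (√(log x) * (1 + log (6 * log x)))) := by
        rw [← exp_nat_mul]
        push_cast
        ring_nf
    _ ≤ yy δ x := hrpow.trans hy

end Parameters

section ExceptionalPrimes

/-- The primes `q ∈ Q_H` for which the sum of the weights `λ_b(H; q, n)` over `-Ky < n ≤ y` is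
farther than `y / H ^ (1 + ε)` from `(K + 1) y`. -/
noncomputable def exceptionalPrimes (δ M : ℝ) (K : ℕ) (ξ ε x H : ℝ) (b : ℤ) : Finset ℕ :=
  {q ∈ QH δ ξ x H | (yy δ x : ℝ) / H ^ (1 + ε) <
    |(∑ n ∈ Ioc (-((K * yy δ x : ℕ) : ℤ)) (yy δ x : ℤ), lam M (zz δ x) K b H q n) -
      ((K : ℝ) + 1) * (yy δ x : ℝ)|}

variable {δ M ξ ε x H : ℝ} {K : ℕ}

lemma EE_card_exceptionalPrimes_le_card :
    EE δ x (fun b => (#(exceptionalPrimes δ M K ξ ε x H b) : ℝ)) ≤ #(QH δ ξ x H) := by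
  rw [EE_eq_expect]
  exact expect_le (nonempty_range_iff.2 (PP_ne_zero _)) fun b _ =>
    Nat.cast_le.2 (card_filter_le _ _)

lemma EE_card_exceptionalPrimes_le_mul_div {C : ℝ} (hH : 0 < H) (hC : H ^ (M - 4 - 2 * ε) ≤ C) :
    EE δ x (fun b => (#(exceptionalPrimes δ M K ξ ε x H b) : ℝ)) ≤
      C * #(QH δ ξ x H) / H ^ (M - 4 - 2 * ε) := by
  refine EE_card_exceptionalPrimes_le_card.trans ?_
  rw [le_div_iff₀' (rpow_pos_of_pos hH _)]
  gcongr

lemma EE_card_exceptionalPrimes_le (hM : 2 ≤ M) (hH : 1 ≤ H) (hKH : K ≤ H)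
    (hy : 0 < (yy δ x : ℝ)) (hHz : H ^ M ≤ zz δ x) (hzH : zz δ x ≤ yy δ x / (ξ * H))
    (hdiag : (K : ℝ) ^ 2 * H ^ M *
      exp (K * H * ∑ p ∈ primesBetween (H ^ M) (zz δ x), 2 / (p : ℝ)) ^ 2 ≤ yy δ x) :
    EE δ x (fun b => (#(exceptionalPrimes δ M K ξ ε x H b) : ℝ)) ≤
      secondMomentConst K * (K + 1) ^ 2 * #(QH δ ξ x H) / H ^ (M - 4 - 2 * ε) := by
  have hH0 : 0 < H := by linarith
  have hpow : H ^ (2 - M) * (H ^ (1 + ε)) ^ 2 = (H ^ (M - 4 - 2 * ε))⁻¹ := by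
    rw [← rpow_mul_natCast hH0.le, ← rpow_add hH0, ← rpow_neg hH0.le]
    push_cast
    ring_nf
  rw [EE_eq_expect]
  calc _ ≤ #(QH δ ξ x H) * (secondMomentConst K * (((K : ℝ) + 1) * yy δ x) ^ 2 * H ^ (2 - M) /
        (yy δ x / H ^ (1 + ε)) ^ 2) :=
        expect_card_filter_lt_abs_le _ _ _ (by positivity) fun q hq => by
          obtain ⟨-, hq, hlt, hle⟩ := mem_filter.1 hq
          exact expect_sq_sum_lam_sub_le hM hH hKH hHz hq (hzH.trans_lt hlt) hle hdiag
    _ = secondMomentConst K * (K + 1) ^ 2 * #(QH δ ξ x H) *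
        (H ^ (2 - M) * (H ^ (1 + ε)) ^ 2) := by
        field_simp
    _ = _ := by rw [hpow, div_eq_mul_inv]

lemma rpow_le_rpow_abs_of_le {a b e : ℝ} (ha : 1 ≤ a) (hab : a ≤ b) : a ^ e ≤ b ^ |e| :=
  calc a ^ e ≤ a ^ |e| := by gcongr; exact le_abs_self e
    _ ≤ b ^ |e| := by gcongr

lemma exists_eventually_EE_card_exceptionalPrimes_le (δ ε : ℝ) (K : ℕ) (hξ : 1 ≤ ξ) (hM : 2 ≤ M) :
    ∃ C : ℝ, 0 < C ∧ ∀ᶠ x in atTop, ∀ H ∈ frakH δ ξ x,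
      EE δ x (fun b => (#(exceptionalPrimes δ M K ξ ε x H b) : ℝ)) ≤
        C * #(QH δ ξ x H) / H ^ (M - 4 - 2 * ε) := by
  have hconst : 0 < secondMomentConst K := by
    rw [secondMomentConst]
    positivity
  refine ⟨secondMomentConst K * (K + 1) ^ 2 + (K : ℝ) ^ |M - 4 - 2 * ε|, by positivity, ?_⟩
  filter_upwards [eventually_zz_pos δ, eventually_exp_half_log_le_yy δ,
    eventually_forall_mem_frakH_rpow_le_zz δ hξ (M := M) (by linarith),
    eventually_forall_mem_frakH_diagonal_le δ hξ (M := M) (by linarith) K]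
    with x hz hy hHz hdiag H hH
  have hH1 : 1 ≤ H := one_le_of_mem_frakH hξ hH
  have hH0 : 0 < H := by linarith
  rcases le_or_gt (K : ℝ) H with hKH | hKH
  · refine (EE_card_exceptionalPrimes_le hM hH1 hKH ((exp_pos _).trans_le hy) (hHz H hH)
      (zz_le_div_of_mem_frakH (by linarith) hz hH0 hH) (hdiag H hH)).trans ?_
    gcongr
    exact le_add_of_nonneg_right (by positivity)
  · exact EE_card_exceptionalPrimes_le_mul_div hH0 <| (rpow_le_rpow_abs_of_le hH1 hKH.le).trans
      (le_add_of_nonneg_left (by positivity))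

end ExceptionalPrimes

end

theorem stmt14_general (δ M : ℝ) (K : ℕ) {ξ ε : ℝ} (hξ : 1 ≤ ξ) (hMε : 2 ≤ M ∨ -1 ≤ ε) :
    ∃ C : ℝ, 0 < C ∧ ∃ x₀ : ℝ, ∀ x ≥ x₀, ∀ H ∈ frakH δ ξ x,
      EE δ x (fun b => ((exceptionalPrimes δ M K ξ ε x H b).card : ℝ)) ≤
        C * ((QH δ ξ x H).card : ℝ) / H ^ (M - 4 - 2 * ε) := by
  rcases le_or_gt 2 M with hM | hM
  · obtain ⟨C, hC, hlarge⟩ := exists_eventually_EE_card_exceptionalPrimes_le δ ε K hξ hM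
    exact ⟨C, hC, Filter.eventually_atTop.1 hlarge⟩
  · have hε : -1 ≤ ε := hMε.resolve_left hM.not_ge
    exact ⟨1, one_pos, 0, fun x _ H hH =>
      have hH1 := one_le_of_mem_frakH hξ hH
      EE_card_exceptionalPrimes_le_mul_div (one_pos.trans_le hH1)
        (Real.rpow_le_one_of_one_le_of_nonpos hH1 (by linarith))⟩

theorem stmt14 (δ M : ℝ) (K : ℕ) (ξ ε : ℝ)
    (hδ0 : 0 < δ) (hδ1 : δ < 1/2) (hK : 2 ≤ K) (hξ : 1 < ξ) (hM : 2 ≤ M) (hε : 0 < ε) :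
    ∃ C : ℝ, 0 < C ∧ ∃ x₀ : ℝ, ∀ x ≥ x₀, ∀ H ∈ frakH1 δ ξ x,
      EE δ x (fun b => (((QH δ ξ x H).filter (fun q =>
          (yy δ x : ℝ) / H ^ (1 + ε) <
            |(∑ n ∈ Finset.Ioc (-((K * yy δ x : ℕ) : ℤ)) ((yy δ x : ℤ)),
                lam M (zz δ x) K b H q n) - ((K : ℝ) + 1) * (yy δ x : ℝ)|)).card : ℝ)) ≤
        C * ((QH δ ξ x H).card : ℝ) / H ^ (M - 4 - 2 * ε) := by
  obtain ⟨C, hC, x₀, hx₀⟩ := stmt14_general δ M K hξ.le (.inl hM)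
  exact ⟨C, hC, x₀, fun x hx H ⟨j, _, hj⟩ => hx₀ x hx H ⟨j, hj⟩⟩
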